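/- Let ρ₀ satisfy the stated first-order equation with a < ρ₀ < b. Then the function z ↦ b·ln((ρ₀(z) − a)/(ρ₀(z) + a)) − a·ln((b − ρ₀(z))/(b + ρ₀(z))) − √2·a·b·(b² − a²)·z is constant on ℝ; equivalently, there is c₀ ∈ ℝ such that c₀ + √2ab(b² − a²)z = b·ln((ρ₀(z) − a)/(ρ₀(z) + a)) − a·ln((b − ρ₀(z))/(b + ρ₀(z))) for all z ∈ ℝ. -/

import Mathlib

/-- If `ρ₀' = (√2/2)(ρ₀² − a²)(b² − ρ₀²)` with `a < ρ₀ < b`, then there is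
`c₀ ∈ ℝ` such that for all `z`,
`c₀ + √2 a b (b² − a²) z = b ln((ρ₀ − a)/(ρ₀ + a)) − a ln((b − ρ₀)/(b + ρ₀))`. -/
theorem statement4 (a b : ℝ) (ha : 0 < a) (hab : a < b) (ρ₀ : ℝ → ℝ)
    (hreg : ContDiff ℝ 1 ρ₀)
    (hderiv : ∀ z, deriv ρ₀ z =
      Real.sqrt 2 / 2 * ((ρ₀ z) ^ 2 - a ^ 2) * (b ^ 2 - (ρ₀ z) ^ 2))
    (hbnd : ∀ z, a < ρ₀ z ∧ ρ₀ z < b) :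
    ∃ c₀ : ℝ, ∀ z : ℝ,
      c₀ + Real.sqrt 2 * a * b * (b ^ 2 - a ^ 2) * z =
        b * Real.log ((ρ₀ z - a) / (ρ₀ z + a)) - a * Real.log ((b - ρ₀ z) / (b + ρ₀ z)) := by
  have hF : ∀ z, HasDerivAt (fun z => b * Real.log ((ρ₀ z - a) / (ρ₀ z + a))
      - a * Real.log ((b - ρ₀ z) / (b + ρ₀ z))
      - Real.sqrt 2 * a * b * (b ^ 2 - a ^ 2) * z) 0 z := by
    intro z
    obtain ⟨h1, h2⟩ := hbnd z
    have hρ : HasDerivAt ρ₀ (deriv ρ₀ z) z :=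
      ((hreg.differentiable (by norm_num)) z).hasDerivAt
    rw [hderiv z] at hρ
    have e1 : ρ₀ z - a ≠ 0 := by linarith
    have e2 : ρ₀ z + a ≠ 0 := by linarith
    have e3 : b - ρ₀ z ≠ 0 := by linarith
    have e4 : b + ρ₀ z ≠ 0 := by linarith
    have d1 := (((hρ.sub_const a).div (hρ.add_const a) e2).log (div_ne_zero e1 e2)).const_mul b
    have d2 := (((hρ.const_sub b).div (hρ.const_add b) e4).log (div_ne_zero e3 e4)).const_mul a
    have d3 := (hasDerivAt_id z).const_mul (Real.sqrt 2 * a * b * (b ^ 2 - a ^ 2))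
    refine ((d1.sub d2).sub d3).congr_deriv ?_
    simp only [Pi.div_apply]
    field_simp
    ring
  refine ⟨b * Real.log ((ρ₀ 0 - a) / (ρ₀ 0 + a)) - a * Real.log ((b - ρ₀ 0) / (b + ρ₀ 0))
      - Real.sqrt 2 * a * b * (b ^ 2 - a ^ 2) * 0, fun z => ?_⟩
  have := is_const_of_deriv_eq_zero (fun z => (hF z).differentiableAt)
    (fun z => (hF z).deriv) z 0
  linarith
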